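/- Let n, d be positive integers and define A_n as the set of positive integers d such that every finite unit-step walk of Gaussian integers containing two terms differing by n also contains two terms differing by d. Then d ∈ A_n if and only if k(n,d) ≥ |r(n,d)| + 1, where n = k(n,d)·d + r(n,d) with r(n,d) ∈ [-⌊d/2⌋, ⌈d/2⌉-1]. -/

import Mathlib

/-- Nearest-neighbour relation on the square lattice. -/
def LatticeAdj (x y x' y' : ℤ) : Prop :=
  (y' = y ∧ (x' = x + 1 ∨ x' = x - 1)) ∨ (x' = x ∧ (y' = y + 1 ∨ y' = y - 1))

/-- A signed count of the crossings of the walk `q`, translated by `(a + e / 2, 0)` and prolonged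
upwards by one step, with the leftward horizontal ray starting at `(x, y + 1 / 2)`. -/
def crossing (qx qy : ℕ → ℤ) (L : ℕ) (a e x y : ℤ) : ℤ :=
  (∑ j ∈ Finset.range L, (if 2 * qx j + 2 * a + e < 2 * x then
    ((if y < qy (j + 1) then 1 else 0) - (if y < qy j then 1 else 0)) else 0)) -
    (if 2 * qx 0 + 2 * a + e < 2 * x ∧ y = qy 0 then 1 else 0)

lemma crossing_right (qx qy : ℕ → ℤ) (L : ℕ) (a e x y : ℤ) (he : -1 ≤ e) (he' : e ≤ 1)
    (hq : ∀ j < L, LatticeAdj (qx j) (qy j) (qx (j + 1)) (qy (j + 1)))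
    (h : ∀ j ≤ L, qy j = y → x ≠ qx j + a) (h' : ∀ j ≤ L, qy j = y → x + 1 ≠ qx j + a) :
    crossing qx qy L a e (x + 1) y = crossing qx qy L a e x y := by
  unfold crossing
  congr 1
  · refine Finset.sum_congr rfl fun j hj => ?_
    have hj' := Finset.mem_range.1 hj
    have h1 := hq j hj'
    have h2 := h j (by omega)
    have h3 := h (j + 1) (by omega)
    have h4 := h' j (by omega)
    have h5 := h' (j + 1) (by omega)
    unfold LatticeAdj at h1
    split_ifs <;> omega
  · have h2 := h 0 (by omega)
    have h4 := h' 0 (by omega)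
    split_ifs <;> omega

lemma crossing_up (qx qy : ℕ → ℤ) (L : ℕ) (a e x y : ℤ) (he : -1 ≤ e) (he' : e ≤ 1)
    (hq : ∀ j < L, LatticeAdj (qx j) (qy j) (qx (j + 1)) (qy (j + 1)))
    (hbot : qy L ≤ y) (htop : y + 1 ≤ qy 0)
    (h' : ∀ j ≤ L, qy j = y + 1 → x ≠ qx j + a) :
    crossing qx qy L a e x (y + 1) = crossing qx qy L a e x y := by
  have key : ∀ M ≤ L,
      (∑ j ∈ Finset.range M, (if 2 * qx j + 2 * a + e < 2 * x then
        (((if y < qy (j + 1) then 1 else 0) - (if y < qy j then 1 else 0)) : ℤ) else 0)) -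
      (∑ j ∈ Finset.range M, (if 2 * qx j + 2 * a + e < 2 * x then
        (((if y + 1 < qy (j + 1) then 1 else 0) - (if y + 1 < qy j then 1 else 0)) : ℤ) else 0))
      = (if 2 * qx M + 2 * a + e < 2 * x ∧ y + 1 = qy M then 1 else 0) -
        (if 2 * qx 0 + 2 * a + e < 2 * x ∧ y + 1 = qy 0 then 1 else 0) := by
    intro M
    induction M with
    | zero => intro _; simp
    | succ M ih =>
      intro hM
      have ih' := ih (by omega)
      rw [Finset.sum_range_succ, Finset.sum_range_succ, add_sub_add_comm, ih']
      have h1 := hq M (by omega)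
      have h2 := h' M (by omega)
      have h3 := h' (M + 1) hM
      unfold LatticeAdj at h1
      generalize (if 2 * qx 0 + 2 * a + e < 2 * x ∧ y + 1 = qy 0 then (1 : ℤ) else 0) = c
      split_ifs <;> omega
  have hL := key L le_rfl
  unfold crossing
  rw [if_neg (show ¬ (2 * qx L + 2 * a + e < 2 * x ∧ y + 1 = qy L) by omega)] at hL
  rw [if_neg (show ¬ (2 * qx 0 + 2 * a + e < 2 * x ∧ y = qy 0) by omega)]
  linarith

lemma crossing_adj (qx qy : ℕ → ℤ) (L : ℕ) (a e x y x' y' : ℤ) (he : -1 ≤ e) (he' : e ≤ 1)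
    (hq : ∀ j < L, LatticeAdj (qx j) (qy j) (qx (j + 1)) (qy (j + 1)))
    (hadj : LatticeAdj x y x' y')
    (hbot : qy L ≤ y) (htop : y ≤ qy 0) (hbot' : qy L ≤ y') (htop' : y' ≤ qy 0)
    (h : ∀ j ≤ L, qy j = y → x ≠ qx j + a) (h' : ∀ j ≤ L, qy j = y' → x' ≠ qx j + a) :
    crossing qx qy L a e x' y' = crossing qx qy L a e x y := by
  rcases hadj with ⟨rfl, rfl | hx⟩ | ⟨rfl, rfl | hy⟩
  · exact crossing_right qx qy L a e x y' he he' hq h h'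
  · obtain rfl : x = x' + 1 := by omega
    exact (crossing_right qx qy L a e x' y' he he' hq h' h).symm
  · exact crossing_up qx qy L a e x' y he he' hq hbot htop' h'
  · obtain rfl : y = y' + 1 := by omega
    exact (crossing_up qx qy L a e x' y' he he' hq hbot' htop h).symm

lemma crossing_const (qx qy : ℕ → ℤ) (L : ℕ) (a e : ℤ) (he : -1 ≤ e) (he' : e ≤ 1)
    (hq : ∀ j < L, LatticeAdj (qx j) (qy j) (qx (j + 1)) (qy (j + 1)))
    (x y : ℕ → ℤ) (l : ℕ)
    (hz : ∀ j < l, LatticeAdj (x j) (y j) (x (j + 1)) (y (j + 1)))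
    (hbot : ∀ i ≤ l, qy L ≤ y i) (htop : ∀ i ≤ l, y i ≤ qy 0)
    (h : ∀ i ≤ l, ∀ j ≤ L, qy j = y i → x i ≠ qx j + a) (i : ℕ) (hi : i ≤ l) :
    crossing qx qy L a e (x i) (y i) = crossing qx qy L a e (x 0) (y 0) := by
  induction i with
  | zero => rfl
  | succ i ih =>
    have hi' : i ≤ l := by omega
    rw [← ih hi']
    exact crossing_adj qx qy L a e _ _ _ _ he he' hq (hz i (by omega)) (hbot i hi') (htop i hi')
      (hbot _ hi) (htop _ hi) (h i hi') (h _ hi)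

lemma exists_subwalk (x y : ℕ → ℤ) (l : ℕ)
    (hz : ∀ j < l, LatticeAdj (x j) (y j) (x (j + 1)) (y (j + 1)))
    (s t : ℕ) (hs : s ≤ l) (ht : t ≤ l) :
    ∃ (L : ℕ) (f : ℕ → ℕ), f 0 = s ∧ f L = t ∧ (∀ j ≤ L, f j ≤ l) ∧
      ∀ j < L, LatticeAdj (x (f j)) (y (f j)) (x (f (j + 1))) (y (f (j + 1))) := by
  rcases le_total s t with hst | hst
  · refine ⟨t - s, fun j => s + j, by simp, by simp; omega, fun j hj => by simp; omega, ?_⟩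
    intro j hj
    exact hz (s + j) (by omega)
  · refine ⟨s - t, fun j => s - j, by simp, by simp; omega, fun j hj => by simp; omega, ?_⟩
    intro j hj
    have h := hz (s - (j + 1)) (by omega)
    rw [show s - (j + 1) + 1 = s - j by omega] at h
    unfold LatticeAdj at h ⊢
    simp only
    omega

/-- If the horizontal differences `a` and `b` are avoided, so are `a + b - 1`, `a + b`
and `a + b + 1`. -/
lemma difference_of_add (x y : ℕ → ℤ) (l : ℕ)
    (hz : ∀ j < l, LatticeAdj (x j) (y j) (x (j + 1)) (y (j + 1)))
    (a b e : ℤ) (ha : 0 < a) (hb : 0 < b) (he : -1 ≤ e) (he' : e ≤ 1)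
    (hn : ∃ s t, s ≤ l ∧ t ≤ l ∧ y s = y t ∧ x s = x t + (a + b + e)) :
    (∃ s t, s ≤ l ∧ t ≤ l ∧ y s = y t ∧ x s = x t + a) ∨
    (∃ s t, s ≤ l ∧ t ≤ l ∧ y s = y t ∧ x s = x t + b) := by
  by_contra hcon
  push Not at hcon
  obtain ⟨hA, hB⟩ := hcon
  obtain ⟨s, t, hs, ht, hyst, hxst⟩ := hn
  have hne : (Finset.range (l + 1)).Nonempty := ⟨0, by simp⟩
  obtain ⟨T, hT, hTmax⟩ := Finset.exists_max_image (Finset.range (l + 1)) y hne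
  obtain ⟨M, hM, hMmin⟩ := Finset.exists_min_image (Finset.range (l + 1)) y hne
  simp only [Finset.mem_range, Nat.lt_succ_iff] at hT hTmax hM hMmin
  obtain ⟨L, f, hf0, hfL, hfl, hq⟩ := exists_subwalk x y l hz T M hT hM
  have c1 := crossing_const (fun j => x (f j)) (fun j => y (f j)) L a e he he' hq x y l hz
    (by simpa [hfL] using hMmin) (by simpa [hf0] using hTmax)
    (fun i hi j hj hij => hA i (f j) hi (hfl j hj) hij.symm)
  have c2 := crossing_const (fun j => x (f j)) (fun j => y (f j)) L (-b) (-e) (by omega)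
    (by omega) hq x y l hz
    (by simpa [hfL] using hMmin) (by simpa [hf0] using hTmax)
    (fun i hi j hj hij => by have := hB (f j) i (hfl j hj) hi hij; omega)
  have shift : ∀ u v, crossing (fun j => x (f j)) (fun j => y (f j)) L (-b) (-e) u v =
      crossing (fun j => x (f j)) (fun j => y (f j)) L a e (u + (a + b + e)) v := by
    intro u v
    have hlt : ∀ w, (2 * w + 2 * (-b) + (-e) < 2 * u) ↔
        (2 * w + 2 * a + e < 2 * (u + (a + b + e))) := by
      intro w; omega
    simp only [crossing, hlt]
  have top : ∀ u, crossing (fun j => x (f j)) (fun j => y (f j)) L a e u (y T) =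
      - (if 2 * x T + 2 * a + e < 2 * u then 1 else 0) := by
    intro u
    unfold crossing
    rw [Finset.sum_eq_zero]
    · simp [hf0]
    · intro j hj
      have hj' := Finset.mem_range.1 hj
      have h1 := hTmax (f j) (hfl j (by omega))
      have h2 := hTmax (f (j + 1)) (hfl (j + 1) (by omega))
      simp only
      split_ifs <;> omega
  have e1 := c1 T hT
  have e2 := c1 s hs
  have e3 := c2 T hT
  have e4 := c2 t ht
  rw [← e3, shift, shift, ← hxst, ← hyst, e2, ← e1, top, top] at e4
  rw [if_neg (by omega), if_pos (by omega)] at e4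
  omega

lemma difference_of_mul_add (x y : ℕ → ℤ) (l : ℕ)
    (hz : ∀ j < l, LatticeAdj (x j) (y j) (x (j + 1)) (y (j + 1)))
    (d : ℤ) (hd : 0 < d) (k : ℕ) (r : ℤ) (hr : |r| ≤ k)
    (hn : ∃ s t, s ≤ l ∧ t ≤ l ∧ y s = y t ∧ x s = x t + ((k + 1) * d + r)) :
    ∃ s t, s ≤ l ∧ t ≤ l ∧ y s = y t ∧ x s = x t + d := by
  induction k generalizing r with
  | zero =>
    obtain rfl : r = 0 := by simpa using hr
    simpa using hn
  | succ k ih =>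
    rw [abs_le] at hr
    push_cast at hr hn
    obtain ⟨e, he, he', hre⟩ : ∃ e : ℤ, -1 ≤ e ∧ e ≤ 1 ∧ |r - e| ≤ k := by
      simp only [abs_le]
      rcases lt_trichotomy r 0 with h | h | h
      · exact ⟨-1, by omega⟩
      · exact ⟨0, by omega⟩
      · exact ⟨1, by omega⟩
    have hpos : 0 < ((k : ℤ) + 1) * d + (r - e) := by
      have := (abs_le.1 hre).1
      nlinarith [mul_nonneg (Int.natCast_nonneg k) (show 0 ≤ d - 1 by omega)]
    rcases difference_of_add x y l hz d (((k : ℤ) + 1) * d + (r - e)) e hd hpos he he'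
      (by rwa [show d + (((k : ℤ) + 1) * d + (r - e)) + e = ((k : ℤ) + 1 + 1) * d + r by ring])
      with h | h
    · exact h
    · exact ih _ hre h

lemma latticeAdj_of_norm {p q : GaussianInt} (h : (q - p).norm = 1) :
    LatticeAdj p.re p.im q.re q.im := by
  rw [Zsqrtd.norm_def, Zsqrtd.re_sub, Zsqrtd.im_sub] at h
  set u := q.re - p.re with hu
  set v := q.im - p.im with hv
  have h1 : u ≤ 1 := by nlinarith [mul_self_nonneg v]
  have h2 : -1 ≤ u := by nlinarith [mul_self_nonneg v]
  have h3 : v ≤ 1 := by nlinarith [mul_self_nonneg u]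
  have h4 : -1 ≤ v := by nlinarith [mul_self_nonneg u]
  unfold LatticeAdj
  interval_cases u <;> interval_cases v <;> omega

/-- Single steps between neighbouring Gaussian integers inside a set. -/
def StepIn (S : Set GaussianInt) (p q : GaussianInt) : Prop :=
  p ∈ S ∧ q ∈ S ∧ (q - p).norm = 1

lemma exists_walk_of_reflTransGen {S : Set GaussianInt} {p q : GaussianInt} (hp : p ∈ S)
    (h : Relation.ReflTransGen (StepIn S) p q) :
    ∃ (l : ℕ) (z : ℕ → GaussianInt), z 0 = p ∧ z l = q ∧ (∀ j ≤ l, z j ∈ S) ∧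
      ∀ j < l, (z (j + 1) - z j).norm = 1 := by
  induction h with
  | refl => exact ⟨0, fun _ => p, rfl, rfl, fun _ _ => hp, fun j hj => by omega⟩
  | @tail b c _ hbc ih =>
    obtain ⟨l, z, h0, hl, hS, hstep⟩ := ih
    refine ⟨l + 1, fun i => if i ≤ l then z i else c, by simp [h0], by simp, ?_, ?_⟩
    · intro j _
      by_cases hj' : j ≤ l
      · simpa [hj'] using hS j hj'
      · simpa [hj'] using hbc.2.1
    · intro j hj
      rcases Nat.lt_succ_iff_lt_or_eq.1 hj with h | rfl
      · simpa [h.le, Nat.succ_le_of_lt h] using hstep j h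
      · simpa [hl] using hbc.2.2

lemma reach_right {S : Set GaussianInt} (y x : ℤ) (m : ℕ)
    (h : ∀ u, x ≤ u → u ≤ x + m → (⟨u, y⟩ : GaussianInt) ∈ S) :
    Relation.ReflTransGen (StepIn S) ⟨x, y⟩ ⟨x + m, y⟩ := by
  induction m with
  | zero => simpa using Relation.ReflTransGen.refl
  | succ m ih =>
    push_cast at h ⊢
    refine (ih fun u h1 h2 => h u h1 (by omega)).tail
      ⟨h _ (by omega) (by omega), h _ (by omega) (by omega), ?_⟩
    simp [Zsqrtd.norm_def]

lemma reach_up {S : Set GaussianInt} (x y : ℤ) (m : ℕ)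
    (h : ∀ v, y ≤ v → v ≤ y + m → (⟨x, v⟩ : GaussianInt) ∈ S) :
    Relation.ReflTransGen (StepIn S) ⟨x, y⟩ ⟨x, y + m⟩ := by
  induction m with
  | zero => simpa using Relation.ReflTransGen.refl
  | succ m ih =>
    push_cast at h ⊢
    refine (ih fun u h1 h2 => h u h1 (by omega)).tail
      ⟨h _ (by omega) (by omega), h _ (by omega) (by omega), ?_⟩
    simp [Zsqrtd.norm_def]

lemma reach_horizontal {S : Set GaussianInt} (y x x' : ℤ) (hx : x ≤ x')
    (h : ∀ u, x ≤ u → u ≤ x' → (⟨u, y⟩ : GaussianInt) ∈ S) :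
    Relation.ReflTransGen (StepIn S) ⟨x, y⟩ ⟨x', y⟩ := by
  obtain ⟨m, rfl⟩ := Int.le.dest hx
  exact reach_right y x m h

lemma reach_vertical {S : Set GaussianInt} (x y y' : ℤ) (hy : y ≤ y')
    (h : ∀ v, y ≤ v → v ≤ y' → (⟨x, v⟩ : GaussianInt) ∈ S) :
    Relation.ReflTransGen (StepIn S) ⟨x, y⟩ ⟨x, y'⟩ := by
  obtain ⟨m, rfl⟩ := Int.le.dest hy
  exact reach_up x y m h

instance {S : Set GaussianInt} : Std.Symm (StepIn S) :=
  ⟨fun p q h => ⟨h.2.1, h.1, by rw [← Zsqrtd.norm_neg, neg_sub]; exact h.2.2⟩⟩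

/-- A battlement-shaped path from `0` to `n`, with rising walls at the multiples of `d + 1` and
falling walls at the multiples of `d - 1`. -/
def battlement (n d K : ℤ) : Set GaussianInt :=
  {p | ∃ j, 0 ≤ j ∧ j ≤ K ∧
    ((p.re = j * (d + 1) ∧ -j ≤ p.im ∧ p.im ≤ K - j) ∨
     (p.im = K - j ∧ j * (d + 1) ≤ p.re ∧ p.re ≤ (j + 1) * (d - 1) ∧ p.re ≤ n) ∨
     (p.im = -j ∧ j * (d - 1) ≤ p.re ∧ p.re ≤ j * (d + 1)) ∨
     (1 ≤ j ∧ p.re = j * (d - 1) ∧ -j ≤ p.im ∧ p.im ≤ K - j + 1))}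

lemma battlement_avoids (n d K R : ℤ) (hd : 0 < d) (hn : n = K * d + R) (hKR : K ≤ R)
    (hRK : R + K ≤ d - 1) (p q : GaussianInt) (hp : p ∈ battlement n d K)
    (hq : q ∈ battlement n d K) : ¬ (q.im = p.im ∧ q.re = p.re + d) := by
  rintro ⟨him, hre⟩
  obtain ⟨j, hj0, hjK, hj⟩ := hp
  obtain ⟨i, hi0, hiK, hi⟩ := hq
  rw [him, hre] at hi
  simp only [mul_add, mul_sub, add_mul, mul_one, one_mul] at hi hj
  have cmp : ∀ a b : ℤ, a ≤ b → a * d + (b - a) ≤ b * d := fun a b h => by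
    nlinarith [mul_nonneg (sub_nonneg.2 h) (show 0 ≤ d - 1 by omega)]
  have c1 : i ≤ j ∧ i * d + (j - i) ≤ j * d ∨ i = j + 1 ∧ i * d = j * d + d ∨
      j + 2 ≤ i ∧ j * d + 2 * d + (i - (j + 2)) ≤ i * d := by
    rcases lt_trichotomy i (j + 1) with h | h | h
    · exact Or.inl ⟨by omega, cmp i j (by omega)⟩
    · exact Or.inr (Or.inl ⟨h, by rw [h]; ring⟩)
    · have := cmp (j + 2) i (by omega)
      exact Or.inr (Or.inr ⟨by omega, by linarith⟩)
  have c2 : i = K ∧ i * d = K * d ∨ i + 1 ≤ K ∧ i * d + d + (K - (i + 1)) ≤ K * d := by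
    rcases hiK.eq_or_lt with h | h
    · exact Or.inl ⟨h, by rw [h]⟩
    · have := cmp (i + 1) K (by omega)
      exact Or.inr ⟨by omega, by linarith⟩
  have c3 : j = K ∧ j * d = K * d ∨ j + 1 ≤ K ∧ j * d + d + (K - (j + 1)) ≤ K * d := by
    rcases hjK.eq_or_lt with h | h
    · exact Or.inl ⟨h, by rw [h]⟩
    · have := cmp (j + 1) K (by omega)
      exact Or.inr ⟨by omega, by linarith⟩
  generalize i * d = I at *
  generalize j * d = J at *
  generalize K * d = N at *
  rcases c1 with c1 | c1 | c1 <;> rcases hj with hj | hj | hj | hj <;>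
    rcases hi with hi | hi | hi | hi <;> omega

lemma battlement_reach (n d K R : ℤ) (hK : 0 ≤ K) (hn : n = K * d + R) (hKR : K ≤ R)
    (hRK : R + K ≤ d - 1) :
    Relation.ReflTransGen (StepIn (battlement n d K)) ⟨0, 0⟩ ⟨n, 0⟩ := by
  have wall : ∀ j : ℤ, 0 ≤ j → j ≤ K → Relation.ReflTransGen (StepIn (battlement n d K))
      ⟨j * (d + 1), -j⟩ ⟨j * (d + 1), K - j⟩ := fun j h0 h1 =>
    reach_vertical _ _ _ (by omega) fun v hv hv' => ⟨j, h0, h1, Or.inl ⟨rfl, hv, hv'⟩⟩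
  have main : ∀ j : ℕ, (j : ℤ) ≤ K → Relation.ReflTransGen (StepIn (battlement n d K))
      ⟨0, 0⟩ ⟨j * (d + 1), -j⟩ := by
    intro j
    induction j with
    | zero => intro _; simpa using Relation.ReflTransGen.refl
    | succ j ih =>
      intro hj
      push_cast at hj ⊢
      have hj0 : (0 : ℤ) ≤ j := by omega
      refine (ih (by omega)).trans ((wall j hj0 (by omega)).trans ?_)
      have hle : ((j : ℤ) + 1) * (d - 1) ≤ n := by nlinarith
      refine (reach_horizontal (S := battlement n d K) (K - (j : ℤ)) (j * (d + 1))
        ((j + 1) * (d - 1)) (by nlinarith)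
        fun u h1 h2 => ⟨j, hj0, by omega, Or.inr (Or.inl ⟨rfl, h1, h2, h2.trans hle⟩)⟩).trans ?_
      have down : Relation.ReflTransGen (StepIn (battlement n d K))
          ⟨((j : ℤ) + 1) * (d - 1), -((j : ℤ) + 1)⟩ ⟨((j : ℤ) + 1) * (d - 1), K - (j : ℤ)⟩ :=
        reach_vertical _ _ _ (by omega) fun v h1 h2 =>
          ⟨j + 1, by omega, by omega, Or.inr (Or.inr (Or.inr
            ⟨by omega, rfl, h1, by simp only; omega⟩))⟩
      refine (Relation.ReflTransGen.stdSymm.symm _ _ down).trans ?_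
      exact reach_horizontal _ _ _ (by nlinarith) fun u h1 h2 =>
        ⟨j + 1, by omega, by omega, Or.inr (Or.inr (Or.inl ⟨rfl, h1, h2⟩))⟩
  obtain ⟨k, rfl⟩ := Int.eq_ofNat_of_zero_le hK
  refine (main k le_rfl).trans ((wall k hK le_rfl).trans ?_)
  rw [sub_self]
  refine reach_horizontal _ _ _ (by rw [hn]; linarith) fun u h1 h2 =>
    ⟨k, hK, le_rfl, Or.inr (Or.inl ⟨by simp, h1, ?_, h2⟩)⟩
  refine h2.trans ?_
  rw [hn]
  linarith

lemma exists_avoiding_walk (n d K R : ℤ) (hd : 0 < d) (hK : 0 ≤ K) (hn : n = K * d + R)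
    (hKR : K ≤ R) (hRK : R + K ≤ d - 1) :
    ∃ (l : ℕ) (z : ℕ → GaussianInt), (∀ j < l, (z (j + 1) - z j).norm = 1) ∧
      (∃ s t, s ≤ l ∧ t ≤ l ∧ z s - z t = (n : GaussianInt)) ∧
      ¬ ∃ u v, u ≤ l ∧ v ≤ l ∧ z u - z v = (d : GaussianInt) := by
  obtain ⟨l, z, h0, hl, hS, hstep⟩ := exists_walk_of_reflTransGen
    (⟨0, le_rfl, hK, Or.inl (by simpa using hK)⟩ : (⟨0, 0⟩ : GaussianInt) ∈ battlement n d K)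
    (battlement_reach n d K R hK hn hKR hRK)
  refine ⟨l, z, hstep, ⟨l, 0, le_rfl, by omega, ?_⟩, ?_⟩
  · rw [h0, hl]
    ext <;> simp
  · rintro ⟨u, v, hu, hv, huv⟩
    refine battlement_avoids n d K R hd hn hKR hRK (z v) (z u) (hS v hv) (hS u hu) ?_
    have hre := congrArg Zsqrtd.re huv
    have him := congrArg Zsqrtd.im huv
    simp only [Zsqrtd.re_sub, Zsqrtd.im_sub, Zsqrtd.re_intCast, Zsqrtd.im_intCast] at hre him
    omega

/-- Main theorem: d ∈ A_n iff k(n,d) ≥ |r(n,d)| + 1. -/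
theorem stmt_4 (n d : ℤ) (hn : 0 < n) (hd : 0 < d) :
    (∀ (l : ℕ) (z : ℕ → GaussianInt),
        (∀ j < l, (z (j + 1) - z j).norm = 1) →
        (∃ s t, s ≤ l ∧ t ≤ l ∧ z s - z t = (n : GaussianInt)) →
        ∃ u v, u ≤ l ∧ v ≤ l ∧ z u - z v = (d : GaussianInt)) ↔
    (∀ k r : ℤ, n = k * d + r → -(d / 2) ≤ r → r ≤ (d + 1) / 2 - 1 →
        k ≥ |r| + 1) := by
  constructor
  · intro H k r hnk hr1 hr2
    by_contra hk
    obtain ⟨K, R, hK, hKn, hKR, hRK⟩ :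
        ∃ K R : ℤ, 0 ≤ K ∧ n = K * d + R ∧ K ≤ R ∧ R + K ≤ d - 1 := by
      rcases le_or_gt 0 r with hr | hr
      · rw [abs_of_nonneg hr] at hk
        have : 0 ≤ k := by
          by_contra hneg
          have : k * d ≤ -1 * d := mul_le_mul_of_nonneg_right (by omega) hd.le
          omega
        exact ⟨k, r, this, hnk, by omega, by omega⟩
      · rw [abs_of_neg hr] at hk
        have : 0 < k := by
          by_contra hneg
          have : k * d ≤ 0 * d := mul_le_mul_of_nonneg_right (by omega) hd.le
          omega
        exact ⟨k - 1, r + d, by omega, by rw [hnk]; ring, by omega, by omega⟩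
    obtain ⟨l, z, hz, hzn, hzd⟩ := exists_avoiding_walk n d K R hd hK hKn hKR hRK
    exact hzd (H l z hz hzn)
  · intro H l z hz hzn
    have hiff : ∀ (m : ℤ) (s t : ℕ), z s - z t = (m : GaussianInt) ↔
        (z s).im = (z t).im ∧ (z s).re = (z t).re + m := by
      intro m s t
      rw [Zsqrtd.ext_iff]
      simp only [Zsqrtd.re_sub, Zsqrtd.im_sub, Zsqrtd.re_intCast, Zsqrtd.im_intCast]
      omega
    simp only [hiff] at hzn ⊢
    obtain ⟨k, r, hnk, hr1, hr2⟩ : ∃ k r : ℤ, n = k * d + r ∧ -(d / 2) ≤ r ∧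
        r ≤ (d + 1) / 2 - 1 := by
      have h1 := Int.emod_add_mul_ediv n d
      have h2 := Int.emod_nonneg n hd.ne'
      have h3 := Int.emod_lt_of_pos n hd
      by_cases h : n % d ≤ (d + 1) / 2 - 1
      · exact ⟨n / d, n % d, by linarith, by omega, h⟩
      · exact ⟨n / d + 1, n % d - d, by linarith, by omega, by omega⟩
    have hk := H k r hnk hr1 hr2
    obtain ⟨m, hm⟩ := Int.eq_ofNat_of_zero_le (show 0 ≤ k - 1 by have := abs_nonneg r; omega)
    obtain rfl : k = m + 1 := by omega
    rw [hnk] at hzn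
    exact difference_of_mul_add (fun j => (z j).re) (fun j => (z j).im) l
      (fun j hj => latticeAdj_of_norm (hz j hj)) d hd m r (by omega) hzn
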